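/- Let k be a field of characteristic zero and f ∈ S = k[x₁,…,xₙ] a nonzero polynomial. Then the ideal Ann(f) ⊆ T = k[y₁,…,yₙ] contains a power of the ideal (y₁,…,yₙ), the apolar algebra A = T/Ann(f) is a finite-dimensional local k-algebra whose maximal ideal 𝔪 is the image of (y₁,…,yₙ), with residue field A/𝔪 = k, and the socle (0 :_A 𝔪) = {a ∈ A : a·𝔪 = 0} has k-dimension 1; that is, A is Gorenstein. -/

import Mathlib

/-- The apolarity action of `T = k[y₁,…,yₙ]` on `S = k[x₁,…,xₙ]`, in which `yᵢ` acts as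
`∂/∂xᵢ`: a polynomial `D = Σ_a c_a y^a` acts as the constant-coefficient differential
operator `Σ_a c_a ∂^a`. -/
noncomputable def apolar {k : Type*} [CommSemiring k] {n : ℕ}
    (D f : MvPolynomial (Fin n) k) : MvPolynomial (Fin n) k :=
  ∑ a ∈ D.support, ∑ b ∈ f.support,
    MvPolynomial.monomial (b - a)
      (D.coeff a * f.coeff b * ∏ i : Fin n, ((b i).descFactorial (a i) : k))

/-- The ideal `(y₁,…,yₙ)` of `T = k[y₁,…,yₙ]`. -/
noncomputable def varIdeal (k : Type*) [Field k] (n : ℕ) : Ideal (MvPolynomial (Fin n) k) :=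
  Ideal.span (Set.range MvPolynomial.X)

/-- The `k`-dimension of `(0 :_A J) = {a ∈ A : a·J = 0}`. -/
noncomputable def colonZeroDim (k : Type*) {A : Type*} [Field k] [CommRing A] [Algebra k A]
    (J : Ideal A) : ℕ :=
  Module.finrank k ↥((Submodule.torsionBySet A A (J : Set A)).restrictScalars k)

/-!
The functional `ψ : [D] ↦ (D ∘ f)(0)` on `A = T / Ann(f)` vanishes on no nonzero ideal: since
`(y^c ∘ g)(0)` is `∏ cᵢ!` times the coefficient of `x^c` in `g`, in characteristic zero a
polynomial `g = D ∘ f` with `(E ∘ g)(0) = 0` for all `E` is zero. Operators of order larger than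
`deg f` kill `f`, so the image `𝔪` of `(y₁,…,yₙ)` in `A` is nilpotent with residue field `k`, which
makes `A` local and Artinian. On the socle `A` acts through `A / 𝔪 = k`, so the kernel of `ψ` on the
socle is an ideal, hence zero: the socle embeds in `k`. It is nonzero, as it contains the last
nonzero power of `𝔪`.
-/

open MvPolynomial Function

section NilpotentIdeal

variable {A : Type*} [CommRing A] {𝔪 : Ideal A}

theorem isNilpotent_map_quotientMk {J I : Ideal A} {N : ℕ} (h : J ^ N ≤ I) :
    IsNilpotent (J.map (Ideal.Quotient.mk I)) :=
  ⟨N, by rwa [← Ideal.map_pow, Ideal.zero_eq_bot, Ideal.map_eq_bot_iff_le_ker, Ideal.mk_ker]⟩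

theorem eq_of_isPrime_of_isNilpotent (hmax : 𝔪.IsMaximal) (hnil : IsNilpotent 𝔪) {P : Ideal A}
    (hP : P.IsPrime) : P = 𝔪 := by
  obtain ⟨N, hN⟩ := hnil
  exact (hmax.eq_of_le hP.ne_top (hP.le_of_pow_le (hN.trans_le bot_le))).symm

theorem finite_of_isMaximal_of_isNilpotent (R : Type*) [CommRing R] [IsArtinianRing R] [Algebra R A]
    [Algebra.FiniteType R A] (hmax : 𝔪.IsMaximal) (hnil : IsNilpotent 𝔪) : Module.Finite R A :=
  (Module.finite_iff_krullDimLE_zero R A).mpr <| .mk₀ fun _ hP =>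
    eq_of_isPrime_of_isNilpotent hmax hnil hP ▸ hmax

variable [Nontrivial A]

theorem ne_top_of_isNilpotent (hnil : IsNilpotent 𝔪) : 𝔪 ≠ ⊤ := by
  rintro rfl
  exact not_isNilpotent_one (Ideal.one_eq_top (R := A) ▸ hnil)

theorem torsionBySet_ne_bot_of_isNilpotent (hnil : IsNilpotent 𝔪) :
    Submodule.torsionBySet A A (𝔪 : Set A) ≠ ⊥ := by
  obtain ⟨a, ha, ha0⟩ := Submodule.exists_mem_ne_zero_of_ne_bot (pow_pred_nilpotencyClass hnil)
  have mul_eq_zero (b : 𝔪) : (b : A) * a = 0 := by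
    have hba := Ideal.mul_mem_mul b.2 ha
    rwa [mul_pow_sub_one (pos_nilpotencyClass_iff.mpr hnil).ne', pow_nilpotencyClass hnil] at hba
  exact Submodule.ne_bot_iff _ |>.mpr ⟨a, (Submodule.mem_torsionBySet_iff _ _).mpr mul_eq_zero, ha0⟩

end NilpotentIdeal

section ResidueField

theorem eq_zero_of_mem_torsionBySet {R A M : Type*} [CommRing R] [CommRing A] [Algebra R A]
    [AddCommMonoid M] [Module R M] {𝔪 : Ideal A} (hsurj : Surjective (algebraMap R (A ⧸ 𝔪)))
    {ψ : A →ₗ[R] M} (hψ : ((LinearMap.mul R A).compr₂ ψ).SeparatingLeft) {a : A}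
    (ha : a ∈ Submodule.torsionBySet A A (𝔪 : Set A)) (hψa : ψ a = 0) : a = 0 := by
  refine hψ a fun b => ?_
  obtain ⟨c, hc⟩ := hsurj (Ideal.Quotient.mk 𝔪 b)
  have hm : b - algebraMap R A c ∈ 𝔪 := Ideal.Quotient.eq.mp hc.symm
  have hma : (b - algebraMap R A c) * a = 0 := (Submodule.mem_torsionBySet_iff _ _).mp ha ⟨_, hm⟩
  have hba : a * b = c • a := by
    rw [Algebra.smul_def]
    linear_combination hma
  rw [LinearMap.compr₂_apply, LinearMap.mul_apply', hba, map_smul, hψa, smul_zero]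

variable {k A : Type*} [Field k] [CommRing A] [Algebra k A] {𝔪 : Ideal A}

theorem bijective_algebraMap_quotient_of_surjective (htop : 𝔪 ≠ ⊤)
    (hsurj : Surjective (algebraMap k (A ⧸ 𝔪))) : Bijective (algebraMap k (A ⧸ 𝔪)) :=
  have := Ideal.Quotient.nontrivial_iff.mpr htop
  ⟨(algebraMap k (A ⧸ 𝔪)).injective, hsurj⟩

theorem isMaximal_of_bijective_algebraMap_quotient
    (hbij : Bijective (algebraMap k (A ⧸ 𝔪))) : 𝔪.IsMaximal :=
  Ideal.Quotient.maximal_of_isField 𝔪 <|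
    (RingEquiv.ofBijective _ hbij).toMulEquiv.symm.isField (Field.toIsField k)

theorem colonZeroDim_eq_one_of_isNilpotent [Nontrivial A] (hnil : IsNilpotent 𝔪)
    (hsurj : Surjective (algebraMap k (A ⧸ 𝔪))) {ψ : A →ₗ[k] k}
    (hψ : ((LinearMap.mul k A).compr₂ ψ).SeparatingLeft) : colonZeroDim k 𝔪 = 1 := by
  let socle := (Submodule.torsionBySet A A (𝔪 : Set A)).restrictScalars k
  have hinj : Injective (ψ.domRestrict socle) := by
    refine (injective_iff_map_eq_zero _).mpr fun a ha => Subtype.ext ?_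
    exact eq_zero_of_mem_torsionBySet hsurj hψ a.2 ha
  have : Nontrivial socle :=
    (Submodule.nontrivial_iff_ne_bot (R := A)).mpr (torsionBySet_ne_bot_of_isNilpotent hnil)
  have : Module.Finite k socle := .of_injective _ hinj
  refine le_antisymm ?_ (Module.finrank_pos (R := k) (M := socle))
  simpa only [Module.finrank_self] using! LinearMap.finrank_le_finrank_of_injective hinj

end ResidueField

section IdealOfVars

variable {σ R : Type*} [CommRing R]

theorem sub_C_constantCoeff_mem_idealOfVars (D : MvPolynomial σ R) :
    D - C (constantCoeff D) ∈ idealOfVars σ R := by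
  rw [← pow_one (idealOfVars σ R), mem_pow_idealOfVars_iff']
  intro x hx
  obtain rfl : x = 0 := (Finsupp.degree_eq_zero_iff x).mp (Nat.lt_one_iff.mp hx)
  simp [constantCoeff_eq]

theorem surjective_algebraMap_quotient_map_idealOfVars (I : Ideal (MvPolynomial σ R)) :
    Surjective (algebraMap R ((MvPolynomial σ R ⧸ I) ⧸
      (idealOfVars σ R).map (Ideal.Quotient.mk I))) := by
  intro x
  obtain ⟨y, rfl⟩ := Ideal.Quotient.mk_surjective x
  obtain ⟨D, rfl⟩ := Ideal.Quotient.mk_surjective y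
  refine ⟨constantCoeff D, (Ideal.Quotient.eq.mpr ?_).symm⟩
  exact Ideal.mem_map_of_mem (Ideal.Quotient.mk I) (sub_C_constantCoeff_mem_idealOfVars D)

end IdealOfVars

section DescFactorial

variable {k σ : Type*} [CommSemiring k] [Fintype σ]

theorem prod_descFactorial_eq_zero_of_not_le {a b : σ →₀ ℕ} (h : ¬ a ≤ b) :
    ∏ i, ((b i).descFactorial (a i) : k) = 0 := by
  obtain ⟨i, hi⟩ : ∃ i, b i < a i := by simpa [Finsupp.le_def] using h
  exact Finset.prod_eq_zero (Finset.mem_univ i) (by simp [Nat.descFactorial_of_lt hi])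

theorem prod_descFactorial_add (a a' b : σ →₀ ℕ) :
    ∏ i, ((b i).descFactorial ((a + a') i) : k) =
      (∏ i, ((b i).descFactorial (a' i) : k)) * ∏ i, (((b - a') i).descFactorial (a i) : k) := by
  rw [← Finset.prod_mul_distrib]
  refine Finset.prod_congr rfl fun i _ => ?_
  have h := Nat.descFactorial_mul_descFactorial (n := b i) (Nat.le_add_left (a' i) (a i))
  rw [Nat.add_sub_cancel] at h
  rw [Finsupp.add_apply, Finsupp.tsub_apply, ← h, Nat.cast_mul, mul_comm]

end DescFactorial

section ApolarAction

variable {k : Type*} [CommSemiring k] {n : ℕ}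

variable (k n) in
/-- The apolarity action `(D, f) ↦ D ∘ f` as a bilinear map. -/
noncomputable def apolarBilin :
    MvPolynomial (Fin n) k →ₗ[k] MvPolynomial (Fin n) k →ₗ[k] MvPolynomial (Fin n) k :=
  (basisMonomials (Fin n) k).constr k fun a => (basisMonomials (Fin n) k).constr k fun b =>
    monomial (b - a) (∏ i, ((b i).descFactorial (a i) : k))

theorem apolarBilin_monomial_monomial (a b : Fin n →₀ ℕ) (c d : k) :
    apolarBilin k n (monomial a c) (monomial b d) =
      monomial (b - a) (c * d * ∏ i, ((b i).descFactorial (a i) : k)) := by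
  have monomial_eq_smul (a : Fin n →₀ ℕ) (c : k) :
      monomial a c = c • basisMonomials (Fin n) k a := by simp [smul_monomial]
  rw [monomial_eq_smul a, monomial_eq_smul b]
  simp only [apolarBilin, map_smul, LinearMap.smul_apply, Module.Basis.constr_basis, smul_monomial,
    smul_eq_mul, mul_assoc, mul_left_comm d]

theorem apolarBilin_apply (D f : MvPolynomial (Fin n) k) : apolarBilin k n D f = apolar D f := by
  conv_lhs => rw [D.as_sum, f.as_sum]
  simp only [map_sum, LinearMap.sum_apply, apolarBilin_monomial_monomial, apolar]
  exact Finset.sum_comm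

theorem apolarBilin_monomial_mul_monomial (a a' b : Fin n →₀ ℕ) (c c' d : k) :
    apolarBilin k n (monomial a c * monomial a' c') (monomial b d) =
      apolarBilin k n (monomial a c) (apolarBilin k n (monomial a' c') (monomial b d)) := by
  rw [monomial_mul]
  simp only [apolarBilin_monomial_monomial]
  rw [prod_descFactorial_add, add_comm a a', tsub_add_eq_tsub_tsub]
  congr 1
  ring

theorem apolar_mul (D E f : MvPolynomial (Fin n) k) :
    apolar (D * E) f = apolar D (apolar E f) := by
  simp only [← apolarBilin_apply]
  induction D using MvPolynomial.induction_on' with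
  | add D D' hD hD' => simp only [add_mul, map_add, LinearMap.add_apply, hD, hD']
  | monomial a c =>
    induction E using MvPolynomial.induction_on' with
    | add E E' hE hE' => simp only [mul_add, map_add, LinearMap.add_apply, hE, hE']
    | monomial a' c' =>
      induction f using MvPolynomial.induction_on' with
      | add f f' hf hf' => simp only [map_add, hf, hf']
      | monomial b d => exact apolarBilin_monomial_mul_monomial a a' b c c' d

theorem apolar_one (f : MvPolynomial (Fin n) k) : apolar 1 f = f := by
  rw [← apolarBilin_apply]
  induction f using MvPolynomial.induction_on' with
  | add f f' hf hf' => rw [map_add, hf, hf']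
  | monomial b d => simp [one_def, apolarBilin_monomial_monomial, -monomial_zero']

theorem constantCoeff_apolar_monomial_one (c : Fin n →₀ ℕ) (f : MvPolynomial (Fin n) k) :
    constantCoeff (apolar (monomial c 1) f) = (∏ i, ((c i).factorial : k)) * coeff c f := by
  rw [← apolarBilin_apply]
  induction f using MvPolynomial.induction_on' with
  | add f f' hf hf' => simp only [map_add, coeff_add, mul_add, hf, hf']
  | monomial b d =>
    classical
    rw [apolarBilin_monomial_monomial, constantCoeff_eq, coeff_monomial, coeff_monomial, one_mul]
    obtain rfl | hbc := eq_or_ne b c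
    · simp only [tsub_self, if_true, Nat.descFactorial_self, mul_comm]
    · rw [if_neg hbc, mul_zero, ite_eq_right_iff, tsub_eq_zero_iff_le]
      intro hle
      rw [prod_descFactorial_eq_zero_of_not_le fun hge => hbc (hle.antisymm hge), mul_zero]

theorem eq_zero_of_forall_constantCoeff_apolar [NoZeroDivisors k] [CharZero k]
    {g : MvPolynomial (Fin n) k} (h : ∀ D, constantCoeff (apolar D g) = 0) : g = 0 := by
  ext c
  have factorial_ne_zero : ∏ i, ((c i).factorial : k) ≠ 0 :=
    Finset.prod_ne_zero_iff.mpr fun i _ => Nat.cast_ne_zero.mpr (Nat.factorial_ne_zero _)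
  have hc := h (monomial c 1)
  rw [constantCoeff_apolar_monomial_one] at hc
  exact (mul_eq_zero.mp hc).resolve_left factorial_ne_zero

/-- The apolar ideal `Ann(f) = {D | D ∘ f = 0}`. -/
noncomputable def apolarIdeal (f : MvPolynomial (Fin n) k) : Ideal (MvPolynomial (Fin n) k) where
  carrier := {D | apolar D f = 0}
  zero_mem' := by
    change apolar 0 f = 0
    rw [← apolarBilin_apply, map_zero, LinearMap.zero_apply]
  add_mem' {D E} (hD : apolar D f = 0) (hE : apolar E f = 0) := by
    change apolar (D + E) f = 0
    rw [← apolarBilin_apply] at hD hE ⊢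
    rw [map_add, LinearMap.add_apply, hD, hE, add_zero]
  smul_mem' D E (hE : apolar E f = 0) := by
    change apolar (D * E) f = 0
    rw [apolar_mul, hE, ← apolarBilin_apply, map_zero]

theorem mem_apolarIdeal {f D : MvPolynomial (Fin n) k} : D ∈ apolarIdeal f ↔ apolar D f = 0 :=
  Iff.rfl

theorem idealOfVars_pow_le_apolarIdeal (f : MvPolynomial (Fin n) k) :
    idealOfVars (Fin n) k ^ (f.totalDegree + 1) ≤ apolarIdeal f := by
  refine fun D hD => Finset.sum_eq_zero fun a ha => Finset.sum_eq_zero fun b hb => ?_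
  have degree_lt : b.degree < a.degree :=
    (le_totalDegree hb).trans_lt ((mem_pow_idealOfVars_iff _ _).mp hD a ha)
  have not_le : ¬ a ≤ b := fun hab => degree_lt.not_ge (Finsupp.degree_mono hab)
  rw [prod_descFactorial_eq_zero_of_not_le not_le, mul_zero, monomial_zero]

theorem apolarIdeal_ne_top {f : MvPolynomial (Fin n) k} (hf : f ≠ 0) : apolarIdeal f ≠ ⊤ := by
  rw [Ideal.ne_top_iff_one, mem_apolarIdeal, apolar_one]
  exact hf

end ApolarAction

section ApolarAlgebra

variable {k : Type*} [CommRing k] {n : ℕ}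

/-- The functional `[D] ↦ (D ∘ f)(0)` on the apolar algebra of `f`; over a field of
characteristic zero it is a Frobenius form. -/
noncomputable def apolarFunctional (f : MvPolynomial (Fin n) k) :
    (MvPolynomial (Fin n) k ⧸ apolarIdeal f) →ₗ[k] k :=
  ((apolarIdeal f).restrictScalars k).liftQ (lcoeff k 0 ∘ₗ (apolarBilin k n).flip f) <| by
    intro D hD
    have hDf : apolarBilin k n D f = 0 := (apolarBilin_apply D f).trans hD
    simp [hDf]

theorem apolarFunctional_mk (f D : MvPolynomial (Fin n) k) :
    apolarFunctional f (Ideal.Quotient.mk _ D) = constantCoeff (apolar D f) := by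
  rw [← apolarBilin_apply]
  rfl

theorem separatingLeft_apolarFunctional [NoZeroDivisors k] [CharZero k]
    (f : MvPolynomial (Fin n) k) :
    ((LinearMap.mul k (MvPolynomial (Fin n) k ⧸ apolarIdeal f)).compr₂
      (apolarFunctional f)).SeparatingLeft := by
  intro x hx
  obtain ⟨D, rfl⟩ := Ideal.Quotient.mk_surjective x
  refine Ideal.Quotient.eq_zero_iff_mem.mpr (eq_zero_of_forall_constantCoeff_apolar fun E => ?_)
  rw [← apolar_mul, ← apolarFunctional_mk, mul_comm, map_mul]
  exact hx (Ideal.Quotient.mk _ E)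

end ApolarAlgebra

/-- Let `k` be a field of characteristic zero and `f ∈ k[x₁,…,xₙ]` a
nonzero polynomial. Then `Ann(f) = {∂ ∈ T : ∂ ∘ f = 0}` is an ideal of `T = k[y₁,…,yₙ]`
containing a power of `(y₁,…,yₙ)`, and the apolar algebra `A = T/Ann(f)` is a
finite-dimensional local `k`-algebra whose unique maximal ideal `𝔪` is the image of
`(y₁,…,yₙ)`, with residue field `A/𝔪 = k`, and whose socle `(0 :_A 𝔪)` has
`k`-dimension `1`; that is, `A` is Gorenstein. -/
theorem deformations_stmt8 {k : Type*} [Field k] [CharZero k] {n : ℕ}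
    (f : MvPolynomial (Fin n) k) (hf : f ≠ 0) :
    ∃ I : Ideal (MvPolynomial (Fin n) k),
      -- I is the apolar ideal Ann(f)
      (I : Set (MvPolynomial (Fin n) k)) = {D | apolar D f = 0} ∧
      -- Ann(f) contains a power of (y₁,…,yₙ)
      (∃ N : ℕ, (varIdeal k n) ^ N ≤ I) ∧
      -- the apolar algebra is finite-dimensional over k
      FiniteDimensional k (MvPolynomial (Fin n) k ⧸ I) ∧
      -- it is local with maximal ideal 𝔪 the image of (y₁,…,yₙ):
      -- that image is a maximal ideal, and is the unique one
      (Ideal.map (Ideal.Quotient.mk I) (varIdeal k n)).IsMaximal ∧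
      (∀ J : Ideal (MvPolynomial (Fin n) k ⧸ I), J.IsMaximal →
        J = Ideal.map (Ideal.Quotient.mk I) (varIdeal k n)) ∧
      -- the residue field A/𝔪 is k
      Function.Bijective (algebraMap k
        ((MvPolynomial (Fin n) k ⧸ I) ⧸ Ideal.map (Ideal.Quotient.mk I) (varIdeal k n))) ∧
      -- and the socle (0 :_A 𝔪) has k-dimension 1, i.e. the apolar algebra is Gorenstein
      colonZeroDim k (Ideal.map (Ideal.Quotient.mk I) (varIdeal k n)) = 1 := by
  have hpow : varIdeal k n ^ (f.totalDegree + 1) ≤ apolarIdeal f :=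
    idealOfVars_pow_le_apolarIdeal f
  have hnil := isNilpotent_map_quotientMk hpow
  have : Nontrivial (MvPolynomial (Fin n) k ⧸ apolarIdeal f) :=
    Ideal.Quotient.nontrivial_iff.mpr (apolarIdeal_ne_top hf)
  have hsurj : Surjective (algebraMap k ((MvPolynomial (Fin n) k ⧸ apolarIdeal f) ⧸
      (varIdeal k n).map (Ideal.Quotient.mk (apolarIdeal f)))) :=
    surjective_algebraMap_quotient_map_idealOfVars (apolarIdeal f)
  have hbij := bijective_algebraMap_quotient_of_surjective (ne_top_of_isNilpotent hnil) hsurj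
  have hmax := isMaximal_of_bijective_algebraMap_quotient hbij
  have hψ := separatingLeft_apolarFunctional f
  exact ⟨apolarIdeal f, rfl, ⟨_, hpow⟩, finite_of_isMaximal_of_isNilpotent k hmax hnil, hmax,
    fun _ hJ => eq_of_isPrime_of_isNilpotent hmax hnil hJ.isPrime, hbij,
    colonZeroDim_eq_one_of_isNilpotent hnil hsurj hψ⟩
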